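/- Let G be an X-generated group. Then M_{sF}(G,X) is isomorphic, as an X-generated inverse monoid, to the inverse monoid S_∘ of pairs (Δ,g) where Δ is a compact connected subgraph of Cay(G,X) containing 1 and g, with multiplication (Δ,g)(Ξ,h) = ((Δ ∪ gΞ)°, gh) and inverse (Δ,g)⁻¹ = (g⁻¹Δ, g⁻¹), generated by the pairs (Γ_x°,[x]) for x ∈ X. -/

import Mathlib

/-!
The isomorphism sends the class of a word `w` to `(Γ_w°, [w])`.

*It is well defined.*  The only relations that are not immediate are those identifying two simple
paths `u`, `v` with common endpoints.  Follow `v`; between two consecutive visits to vertices of `u`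
it runs along a simple path which, together with the segment of `u` joining these two vertices, forms
a simple cycle containing edges of `u` (possibly a degenerate one `x x⁻¹`, which the definition of
simple cycle allows).  Hence any cyclic subgraph containing `u` contains `v`
(`pathEdges_subset_of_cyclic`), so that `Γ_u° = Γ_v°` (`presCon_sound`).

*It is injective.*  If a simple cycle `C` meets `Γ_u` in an edge labelled `a`, the rest of `C` is a
simple path `z⁻¹` with the same endpoints as that edge, and after a detour `a a⁻¹` is inserted
into `u`, replacing it by `z⁻¹ z` produces a word equal to `u` in `M_sF(G,X)` whose graph contains `C` (`exists_presCon_cycle`).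
Therefore the union of all `Γ_{u'}` with `u'` equal to `u` is a cyclic subgraph, so it contains `Γ_u°`;
by finiteness `Γ_v ⊆ Γ_u°` already gives `Γ_v ⊆ Γ_{u'}` for one such `u'`, which yields
`u = v v⁻¹ u` in `M_sF(G,X)`.  By symmetry, `Γ_u° = Γ_v°` and `[u] = [v]` force `u = v`.

*It is surjective*, because every finite connected subgraph containing `1` is `Γ_w` for some `w`.
-/

/-! Common framework: words over a doubled alphabet, inverse monoids,
presentations of inverse monoids as quotients of the free monoid on letters,
the minimum group congruence, F-inverse and strongly F-inverse properties,
and the Margolis-Meakin / M_sF machinery. -/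

namespace SFI

/-- A letter of the doubled alphabet X̄ = X ∪ X⁻¹: a generator together with a
polarity (`true` = the generator itself, `false` = its formal inverse). -/
abbrev Letter (X : Type*) := X × Bool

/-- Words over the doubled alphabet X̄, i.e. elements of the free monoid X̄*. -/
abbrev Word (X : Type*) := FreeMonoid (Letter X)

variable {X : Type*}

/-- The formal inverse of a letter. -/
def invL (a : Letter X) : Letter X := (a.1, !a.2)

theorem invL_invL (a : Letter X) : invL (invL a) = a := by
  cases a; simp [invL]

/-- Formal inversion of a word: reverse the word and invert each letter. -/
def wordInv (w : Word X) : Word X :=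
  FreeMonoid.ofList (((FreeMonoid.toList w).reverse).map invL)

theorem wordInv_mul (u v : Word X) : wordInv (u * v) = wordInv v * wordInv u := by
  simp only [wordInv, FreeMonoid.toList_mul, List.reverse_append, List.map_append,
    FreeMonoid.ofList_append]

theorem wordInv_wordInv (w : Word X) : wordInv (wordInv w) = w := by
  simp only [wordInv, FreeMonoid.toList_ofList, List.map_reverse, List.reverse_reverse,
    List.map_map]
  have : (invL ∘ invL : Letter X → Letter X) = id := funext invL_invL
  rw [this, List.map_id, FreeMonoid.ofList_toList]

/-- Evaluation of a letter in a monoid-with-inversion, along a map `ι` of generators. -/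
def evalLetter {M : Type*} [Monoid M] [Inv M] (ι : X → M) (a : Letter X) : M :=
  if a.2 then ι a.1 else (ι a.1)⁻¹

/-- Evaluation of a word in a monoid-with-inversion, along a map `ι` of generators:
`evalWord ι w` is the element `[w]` represented by the word `w`. -/
def evalWord {M : Type*} [Monoid M] [Inv M] (ι : X → M) (w : Word X) : M :=
  ((FreeMonoid.toList w).map (evalLetter ι)).prod

/-- `M` is `X`-generated via `ι : X → M` if every element of `M` is represented by
some word over the doubled alphabet X̄. -/
def XGen {M : Type*} [Monoid M] [Inv M] (ι : X → M) : Prop :=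
  Function.Surjective (evalWord ι)

/-- Inverse monoids, as a variety: a monoid with an involutive anti-automorphism `⁻¹`
such that `a a⁻¹ a = a` and idempotents (elements of the form `a a⁻¹`) commute.
This is equivalent to every element having a unique von Neumann inverse. -/
class InverseMonoid (M : Type*) extends Monoid M, Inv M where
  mul_inv_rev : ∀ a b : M, (a * b)⁻¹ = b⁻¹ * a⁻¹
  inv_inv : ∀ a : M, a⁻¹⁻¹ = a
  mul_inv_mul : ∀ a : M, a * a⁻¹ * a = a
  idem_mul_comm : ∀ a b : M, a * a⁻¹ * (b * b⁻¹) = b * b⁻¹ * (a * a⁻¹)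

/-- The natural partial order of an inverse monoid: `a ≤ b` iff `a = a a⁻¹ b`. -/
def natLe {M : Type*} [Monoid M] [Inv M] (a b : M) : Prop := a = a * a⁻¹ * b

/-- A congruence has group quotient iff every element of the quotient is (two-sided)
invertible. -/
def IsGroupCon {M : Type*} [Monoid M] (c : Con M) : Prop := ∀ x : c.Quotient, IsUnit x

/-- The minimum group congruence σ of a monoid: the infimum of all congruences whose
quotient is a group.  For an inverse monoid this is the least group congruence, and
the quotient is the maximum group image. -/
def sigmaCon (M : Type*) [Monoid M] : Con M := sInf {c : Con M | IsGroupCon c}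

/-- An inverse monoid is F-inverse if every σ-class has a maximum element in the
natural partial order. -/
def FInverse (M : Type*) [InverseMonoid M] : Prop :=
  ∀ a : M, ∃ m : M, sigmaCon M m a ∧ ∀ b : M, sigmaCon M b a → natLe b m

/-- The word obtained from the prefix of length `k` of `w`. -/
def wordPrefix (w : Word X) (k : ℕ) : Word X :=
  FreeMonoid.ofList ((FreeMonoid.toList w).take k)

/-- `w` labels a simple path starting at `1` in the Cayley graph of the maximum group
image `S/σ` of the inverse monoid `S` (w.r.t. the generating map `ι`): the values of
distinct prefixes of `w` lie in distinct σ-classes, i.e. the vertices visited by the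
path are pairwise distinct. -/
def IsSimplePathWordS {S : Type*} [InverseMonoid S] (ι : X → S) (w : Word X) : Prop :=
  ∀ j k : ℕ, j ≤ (FreeMonoid.toList w).length → k ≤ (FreeMonoid.toList w).length →
    sigmaCon S (evalWord ι (wordPrefix w j)) (evalWord ι (wordPrefix w k)) → j = k

/-- An X-generated inverse monoid `S` (via `ι`) is strongly F-inverse: it is F-inverse,
and the canonical morphism from the Margolis-Meakin expansion `M(S/σ, X)` to `S` sends
all maximal elements of each σ-class of `M(S/σ,X)` (namely, the graphs spanned by simple
paths from 1 to a fixed vertex) to the single maximum element of the corresponding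
σ-class of `S`.  Concretely: any two words labelling simple paths from 1 to the same
vertex of the Cayley graph of S/σ represent the same element of `S`, and this element
is the top of its σ-class. -/
def StronglyFInverse {S : Type*} [InverseMonoid S] (ι : X → S) : Prop :=
  XGen ι ∧ FInverse S ∧
    ∀ u v : Word X, IsSimplePathWordS ι u → IsSimplePathWordS ι v →
      sigmaCon S (evalWord ι u) (evalWord ι v) →
      evalWord ι u = evalWord ι v ∧
        ∀ t : Word X, sigmaCon S (evalWord ι t) (evalWord ι u) →
          natLe (evalWord ι t) (evalWord ι u)

/-! ### Presentations of inverse monoids -/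

/-- The generating pairs of the Wagner congruence on X̄*: `(w w⁻¹ w, w)` and
`(u u⁻¹ v v⁻¹, v v⁻¹ u u⁻¹)`. -/
def wagnerRel : Word X → Word X → Prop := fun a b =>
  (∃ w : Word X, a = w * wordInv w * w ∧ b = w) ∨
  (∃ u v : Word X, a = u * wordInv u * (v * wordInv v) ∧ b = v * wordInv v * (u * wordInv u))

/-- The congruence on X̄* generated by the Wagner relations together with the extra
defining relations `r`; the corresponding quotient is the inverse monoid
`Inv⟨X ∣ r⟩`.  (The relation set is closed under formal inversion; this does not
change the congruence, since any monoid congruence on an inverse monoid automatically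
respects inversion, but it makes the inversion on the quotient directly definable.) -/
def presCon (r : Word X → Word X → Prop) : Con (Word X) :=
  conGen (fun u v => (wagnerRel u v ∨ r u v) ∨
    (wagnerRel (wordInv u) (wordInv v) ∨ r (wordInv u) (wordInv v)))

/-- The inverse monoid presented by the defining relations `r` (together with the
Wagner relations), i.e. `Inv⟨X ∣ r⟩`, a quotient of the free inverse monoid FIM(X). -/
def InvPres (r : Word X → Word X → Prop) : Type _ := (presCon r).Quotient

instance (r : Word X → Word X → Prop) : Monoid (InvPres r) :=
  inferInstanceAs (Monoid (presCon r).Quotient)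

theorem presCon_inv {r : Word X → Word X → Prop} {u v : Word X} (h : presCon r u v) :
    presCon r (wordInv u) (wordInv v) := by
  show ConGen.Rel _ (wordInv u) (wordInv v)
  have h' : ConGen.Rel (fun u v => (wagnerRel u v ∨ r u v) ∨
      (wagnerRel (wordInv u) (wordInv v) ∨ r (wordInv u) (wordInv v))) u v := h
  clear h
  induction h' with
  | of a b hab =>
    apply ConGen.Rel.of
    rcases hab with hab | hab
    · exact Or.inr (by rwa [wordInv_wordInv, wordInv_wordInv])
    · exact Or.inl hab
  | refl a => exact ConGen.Rel.refl _
  | symm _ ih => exact ConGen.Rel.symm ih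
  | trans _ _ ih₁ ih₂ => exact ConGen.Rel.trans ih₁ ih₂
  | mul _ _ ih₁ ih₂ => rw [wordInv_mul, wordInv_mul]; exact ConGen.Rel.mul ih₂ ih₁

instance (r : Word X → Word X → Prop) : Inv (InvPres r) :=
  ⟨Quotient.map' wordInv (fun _ _ h => presCon_inv h)⟩

instance (r : Word X → Word X → Prop) : InverseMonoid (InvPres r) where
  mul_inv_rev a b := by
    refine Quotient.inductionOn₂' a b (fun u v => ?_)
    exact congrArg Quotient.mk'' (wordInv_mul u v)
  inv_inv a := by
    refine Quotient.inductionOn' a (fun u => ?_)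
    exact congrArg Quotient.mk'' (wordInv_wordInv u)
  mul_inv_mul a := by
    refine Quotient.inductionOn' a (fun u => ?_)
    exact Quotient.sound' (ConGen.Rel.of _ _ (Or.inl (Or.inl (Or.inl ⟨u, rfl, rfl⟩))))
  idem_mul_comm a b := by
    refine Quotient.inductionOn₂' a b (fun u v => ?_)
    exact Quotient.sound' (ConGen.Rel.of _ _ (Or.inl (Or.inl (Or.inr ⟨u, v, rfl, rfl⟩))))

/-- The element of `Inv⟨X ∣ r⟩` represented by the word `w`. -/
def mkW (r : Word X → Word X → Prop) (w : Word X) : InvPres r := Quotient.mk'' w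

/-- The canonical generating map `X → Inv⟨X ∣ r⟩`. -/
def genMap (r : Word X → Word X → Prop) : X → InvPres r :=
  fun x => mkW r (FreeMonoid.of (x, true))

/-- The defining relation of a special inverse monoid `Inv⟨X ∣ w = 1⟩`. -/
def specialRel (w : Word X) : Word X → Word X → Prop := fun a b => a = w ∧ b = 1

/-- The defining relations of a special inverse monoid `Inv⟨X ∣ wᵢ = 1 (i ∈ I)⟩`. -/
def familyRel {I : Type*} (w : I → Word X) : Word X → Word X → Prop :=
  fun a b => ∃ i, a = w i ∧ b = 1

/-- The defining relations of an inverse monoid `Inv⟨X ∣ uᵢ = vᵢ (i ∈ I)⟩`. -/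
def pairsRel {I : Type*} (p : I → Word X × Word X) : Word X → Word X → Prop :=
  fun a b => ∃ i, a = (p i).1 ∧ b = (p i).2

/-! ### Cayley graphs -/

section Graph

variable {G : Type*} [Monoid G] [Inv G]

/-- The set of (inverse-closed pairs of) edges of the Cayley graph traversed by the
path starting at `g` and labelled by the list of letters `l`; an edge from `h`
labelled by the letter `a` is recorded as the pair `(h, a)`, together with its
inverse edge `(h·[a], a⁻¹)`. -/
def pathEdges (ιG : X → G) : G → List (Letter X) → Set (G × Letter X)
  | _, [] => ∅
  | g, a :: l =>
      insert (g, a) (insert (g * evalLetter ιG a, invL a)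
        (pathEdges ιG (g * evalLetter ιG a) l))

/-- `Γ_w`: the subgraph (set of edges) of the Cayley graph of `G` spanned by the path
starting at `1` labelled by the word `w`. -/
def Gamma (ιG : X → G) (w : Word X) : Set (G × Letter X) :=
  pathEdges ιG 1 (FreeMonoid.toList w)

/-- `w` labels a simple path starting at `1` in the Cayley graph of `G`: the values of
distinct prefixes of `w` are distinct vertices. -/
def IsSimplePathWordG (ιG : X → G) (w : Word X) : Prop :=
  ∀ j k : ℕ, j ≤ (FreeMonoid.toList w).length → k ≤ (FreeMonoid.toList w).length →
    evalWord ιG (wordPrefix w j) = evalWord ιG (wordPrefix w k) → j = k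

/-- `w` labels a simple cycle (based at `1`) in the Cayley graph of `G`: `w` is
non-empty, `w = 1` holds in `G`, and the initial vertices of the edges of the cycle
(i.e. the values of the proper prefixes of `w`) are pairwise distinct. -/
def IsSimpleCycleWordG (ιG : X → G) (w : Word X) : Prop :=
  w ≠ 1 ∧ evalWord ιG w = 1 ∧
    ∀ j k : ℕ, j < (FreeMonoid.toList w).length → k < (FreeMonoid.toList w).length →
      evalWord ιG (wordPrefix w j) = evalWord ιG (wordPrefix w k) → j = k

/-- The defining relation of the Margolis-Meakin expansion `M(G,X)` as a quotient of
X̄*: two words are identified iff they span the same subgraph of the Cayley graph and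
represent the same element of `G`. -/
def mmRel (ιG : X → G) : Word X → Word X → Prop := fun u v =>
  Gamma ιG u = Gamma ιG v ∧ evalWord ιG u = evalWord ιG v

/-- The generating pairs of the congruence ξ_G: two words labelling simple paths from
`1` to the same element of `G` are identified. -/
def spRel (ιG : X → G) : Word X → Word X → Prop := fun u v =>
  IsSimplePathWordG ιG u ∧ IsSimplePathWordG ιG v ∧ evalWord ιG u = evalWord ιG v

/-- The defining relations of `M_sF(G,X) = M(G,X)/ξ_G` as a quotient of X̄*. -/
def msfRel (ιG : X → G) : Word X → Word X → Prop := fun u v =>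
  mmRel ιG u v ∨ spRel ιG u v

/-- `M_sF(G,X)`: the quotient of the Margolis-Meakin expansion `M(G,X)` by the
congruence ξ_G identifying, for each `g ∈ G`, all graphs spanned by simple paths
from `1` to `g`. -/
abbrev MsF (ιG : X → G) := InvPres (msfRel ιG)

end Graph

/-! ### Reduced words, cyclic words, linked words, invertible pieces -/

/-- A word over X̄ is reduced if it has no factor of the form `x x⁻¹` or `x⁻¹ x`. -/
def ReducedWord (w : Word X) : Prop :=
  ∀ a : Letter X, ¬ ([a, invL a] <:+: FreeMonoid.toList w)

/-- A word over X̄ is cyclically reduced if it is reduced and its first and last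
letters are not mutually inverse. -/
def CyclicallyReducedWord (w : Word X) : Prop :=
  ReducedWord w ∧ ∀ a : Letter X, (FreeMonoid.toList w).head? = some a →
    (FreeMonoid.toList w).getLast? ≠ some (invL a)

/-- A cyclically reduced word is cyclic with respect to `(G,X)` if it labels a simple
cycle in the Cayley graph of `G`. -/
def IsCyclicWord {G : Type*} [Monoid G] [Inv G] (ιG : X → G) (w : Word X) : Prop :=
  CyclicallyReducedWord w ∧ IsSimpleCycleWordG ιG w

/-- `w'` is a cyclic conjugate of `w`. -/
def IsCyclicConjugate (w' w : Word X) : Prop := ∃ u v : Word X, w' = u * v ∧ v * u = w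

/-- A word is linked with respect to `(M, ι)` if for every pair of adjacent letters
`a, b` of the word, `a⁻¹ a = b b⁻¹` holds in `M` (the letters are "matching"). -/
def Linked {M : Type*} [Monoid M] [Inv M] (ι : X → M) (w : Word X) : Prop :=
  ∀ (p q : Word X) (a b : Letter X),
    w = p * (FreeMonoid.of a * (FreeMonoid.of b * q)) →
    (evalLetter ι a)⁻¹ * evalLetter ι a = evalLetter ι b * (evalLetter ι b)⁻¹

/-- `ws` is the factorisation of the word `w` into minimal invertible pieces with
respect to `(M, ι)`: `w` is the concatenation of the members of `ws`, each of which is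
a non-empty word representing an invertible element of `M` such that no proper
non-empty prefix or suffix represents an invertible element of `M`. -/
def IsPieceDecomp {M : Type*} [Monoid M] [Inv M] (ι : X → M) (w : Word X)
    (ws : List (Word X)) : Prop :=
  ws.prod = w ∧ ∀ z ∈ ws, z ≠ 1 ∧ IsUnit (evalWord ι z) ∧
    ∀ p s : Word X, z = p * s → p ≠ 1 → s ≠ 1 →
      ¬ IsUnit (evalWord ι p) ∧ ¬ IsUnit (evalWord ι s)


/-- Left translation of a set of edges of the Cayley graph by `g ∈ G`. -/
def translate {G : Type*} [Monoid G] (g : G) (Δ : Set (G × Letter X)) :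
    Set (G × Letter X) :=
  (fun e => (g * e.1, e.2)) '' Δ

/-- A subgraph `Δ` of the Cayley graph of `G` is cyclic if for every edge `e` of `Δ`
it contains all edges of any simple cycle containing `e`. -/
def IsCyclicSubgraph {G : Type*} [Monoid G] [Inv G] (ιG : X → G)
    (Δ : Set (G × Letter X)) : Prop :=
  ∀ (g : G) (w : Word X), IsSimpleCycleWordG ιG w →
    (translate g (Gamma ιG w) ∩ Δ).Nonempty → translate g (Gamma ιG w) ⊆ Δ

/-- The cyclic closure `Δ°` of a subgraph `Δ`: the smallest cyclic subgraph
containing `Δ`. -/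
def cyclicClosure {G : Type*} [Monoid G] [Inv G] (ιG : X → G)
    (Δ : Set (G × Letter X)) : Set (G × Letter X) :=
  ⋂₀ {Θ | IsCyclicSubgraph ιG Θ ∧ Δ ⊆ Θ}

/-- A subgraph is connected and contains the vertex `1` iff each of its edges lies on
a path starting at `1` and contained in the subgraph. -/
def ConnFromOne {G : Type*} [Monoid G] [Inv G] (ιG : X → G)
    (Δ : Set (G × Letter X)) : Prop :=
  ∀ e ∈ Δ, ∃ w : Word X, Gamma ιG w ⊆ Δ ∧ e ∈ Gamma ιG w

/-- The carrier of the inverse monoid `S_∘`: pairs `(Δ, g)` where `Δ` is a compact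
(i.e. the cyclic closure of a finite connected subgraph containing `1`) connected
subgraph of the Cayley graph of `G` containing the vertices `1` and `g`. -/
structure SCirc {X G : Type*} [Monoid G] [Inv G] (ιG : X → G) where
  edges : Set (G × Letter X)
  pt : G
  compact : ∃ F : Set (G × Letter X), F.Finite ∧ ConnFromOne ιG F ∧
    edges = cyclicClosure ιG F
  conn : ConnFromOne ιG edges
  mem_pt : ∃ w : Word X, Gamma ιG w ⊆ edges ∧ evalWord ιG w = pt

/-! ### Paths in the Cayley graph -/

/-- Formal inversion of a list of letters. -/
def linv (l : List (Letter X)) : List (Letter X) := l.reverse.map invL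

theorem linv_cons (a : Letter X) (l : List (Letter X)) : linv (a :: l) = linv l ++ [invL a] := by
  simp [linv]

section

variable {G : Type*} [Group G] (ι : X → G)

/-- The element of `G` represented by a list of letters. -/
def ev (l : List (Letter X)) : G := (l.map (evalLetter ι)).prod

@[simp] theorem ev_nil : ev ι [] = 1 := by simp [ev]

@[simp] theorem ev_cons (a : Letter X) (l : List (Letter X)) :
    ev ι (a :: l) = evalLetter ι a * ev ι l := by simp [ev]

@[simp] theorem ev_append (l m : List (Letter X)) : ev ι (l ++ m) = ev ι l * ev ι m := by
  simp [ev]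

@[simp] theorem evalLetter_invL (a : Letter X) :
    evalLetter ι (invL a) = (evalLetter ι a)⁻¹ := by
  rcases a with ⟨x, _ | _⟩ <;> simp [evalLetter, invL]

@[simp] theorem ev_linv (l : List (Letter X)) : ev ι (linv l) = (ev ι l)⁻¹ := by
  induction l with
  | nil => simp [linv]
  | cons a l ih => simp [linv_cons, ih]

/-- The initial vertices of the edges of the path from `g` labelled `l`, in order. -/
def iv : G → List (Letter X) → List G
  | _, [] => []
  | g, a :: l => g :: iv (g * evalLetter ι a) l

/-- All vertices of the path from `g` labelled `l`, in order. -/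
def verts (g : G) (l : List (Letter X)) : List G := iv ι g l ++ [g * ev ι l]

theorem iv_append (g : G) (l m : List (Letter X)) :
    iv ι g (l ++ m) = iv ι g l ++ iv ι (g * ev ι l) m := by
  induction l generalizing g with
  | nil => simp [iv]
  | cons a l ih => simp [iv, ih, mul_assoc]

theorem verts_append (g : G) (l m : List (Letter X)) :
    verts ι g (l ++ m) = iv ι g l ++ verts ι (g * ev ι l) m := by
  simp [verts, iv_append, mul_assoc]

theorem verts_cons (g : G) (a : Letter X) (l : List (Letter X)) :
    verts ι g (a :: l) = g :: verts ι (g * evalLetter ι a) l := by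
  simp [verts, iv, mul_assoc]

theorem verts_linv (g : G) (l : List (Letter X)) :
    verts ι (g * ev ι l) (linv l) = (verts ι g l).reverse := by
  induction l generalizing g with
  | nil => simp [verts, linv, iv]
  | cons a l ih =>
    rw [verts_cons, List.reverse_cons, ← ih, linv_cons, verts_append]
    simp [verts, iv, mul_assoc]

theorem iv_eq_map (g : G) (l : List (Letter X)) :
    iv ι g l = (List.range l.length).map (fun j => g * ev ι (l.take j)) := by
  induction l generalizing g with
  | nil => simp [iv]
  | cons a l ih =>
    simp [iv, ih, List.range_succ_eq_map, Function.comp_def, mul_assoc]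

theorem iv_nodup_iff (g : G) (l : List (Letter X)) : (iv ι g l).Nodup ↔ (iv ι 1 l).Nodup := by
  have : iv ι g l = (iv ι 1 l).map (fun x => g * x) := by
    simp [iv_eq_map, Function.comp_def]
  rw [this, List.nodup_map_iff (mul_right_injective g)]

theorem verts_eq_map (g : G) (l : List (Letter X)) :
    verts ι g l = (List.range (l.length + 1)).map (fun j => g * ev ι (l.take j)) := by
  simp [verts, iv_eq_map, List.range_succ]

theorem mem_verts_iff (g x : G) (l : List (Letter X)) :
    x ∈ verts ι g l ↔ ∃ p q, l = p ++ q ∧ x = g * ev ι p := by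
  constructor
  · rw [verts_eq_map, List.mem_map]
    rintro ⟨j, -, rfl⟩
    exact ⟨l.take j, l.drop j, (List.take_append_drop j l).symm, rfl⟩
  · rintro ⟨p, q, rfl, rfl⟩
    rw [verts_append]
    cases q <;> simp [verts, iv]

theorem start_mem_verts (g : G) (l : List (Letter X)) : g ∈ verts ι g l :=
  (mem_verts_iff ι g g l).2 ⟨[], l, rfl, by simp⟩

theorem end_mem_verts (g : G) (l : List (Letter X)) : g * ev ι l ∈ verts ι g l := by
  simp [verts]

theorem simplePath_iff (w : Word X) :
    IsSimplePathWordG ι w ↔ (verts ι 1 (FreeMonoid.toList w)).Nodup := by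
  rw [verts_eq_map, List.nodup_map_iff_inj_on List.nodup_range]
  simp only [List.mem_range, Nat.lt_succ_iff, one_mul]
  exact ⟨fun h j hj k hk e => h j k hj hk e, fun h j k hj hk e => h j hj k hk e⟩

theorem simpleCycle_iff (w : Word X) :
    IsSimpleCycleWordG ι w ↔ FreeMonoid.toList w ≠ [] ∧ ev ι (FreeMonoid.toList w) = 1 ∧
      (iv ι 1 (FreeMonoid.toList w)).Nodup := by
  rw [iv_eq_map, List.nodup_map_iff_inj_on List.nodup_range]
  simp only [List.mem_range, one_mul]
  exact ⟨fun ⟨h0, h1, h⟩ => ⟨h0, h1, fun j hj k hk e => h j k hj hk e⟩,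
    fun ⟨h0, h1, h⟩ => ⟨h0, h1, fun j k hj hk e => h j hj k hk e⟩⟩

theorem pathEdges_append (g : G) (l m : List (Letter X)) :
    pathEdges ι g (l ++ m) = pathEdges ι g l ∪ pathEdges ι (g * ev ι l) m := by
  induction l generalizing g with
  | nil => simp [pathEdges]
  | cons a l ih => simp [pathEdges, ih, Set.insert_union, mul_assoc]

theorem pathEdges_linv (g : G) (l : List (Letter X)) :
    pathEdges ι (g * ev ι l) (linv l) = pathEdges ι g l := by
  induction l generalizing g with
  | nil => simp [pathEdges, linv]
  | cons a l ih =>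
    have h := ih (g * evalLetter ι a)
    rw [linv_cons, pathEdges_append, ev_cons, ← mul_assoc, h]
    simp only [pathEdges, ev_linv, evalLetter_invL, invL_invL, mul_inv_cancel_right]
    ext e
    simp only [Set.mem_union, Set.mem_insert_iff, Set.mem_empty_iff_false]
    tauto

theorem pathEdges_linv' (l : List (Letter X)) (g : G) :
    pathEdges ι g (linv l) = pathEdges ι (g * (ev ι l)⁻¹) l := by
  rw [← pathEdges_linv ι _ l, inv_mul_cancel_right]

theorem mem_pathEdges_iff (g : G) (l : List (Letter X)) (e : G × Letter X) :
    e ∈ pathEdges ι g l ↔ ∃ p a q, l = p ++ a :: q ∧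
      (e = (g * ev ι p, a) ∨ e = (g * ev ι p * evalLetter ι a, invL a)) := by
  constructor
  · intro h
    induction l generalizing g with
    | nil => simp [pathEdges] at h
    | cons b l ih =>
      simp only [pathEdges, Set.mem_insert_iff] at h
      rcases h with h | h | h
      · exact ⟨[], b, l, rfl, Or.inl (by simpa using h)⟩
      · exact ⟨[], b, l, rfl, Or.inr (by simpa using h)⟩
      · obtain ⟨p, a, q, rfl, h'⟩ := ih _ h
        exact ⟨b :: p, a, q, rfl, by simpa [mul_assoc] using h'⟩
  · rintro ⟨p, a, q, rfl, h⟩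
    rw [pathEdges_append]
    right
    simp only [pathEdges, Set.mem_insert_iff]
    tauto

/-- The graph spanned by a path is closed under inversion of edges. -/
theorem inv_mem_pathEdges {g : G} {l : List (Letter X)} {x : G} {a : Letter X}
    (h : (x * evalLetter ι a, invL a) ∈ pathEdges ι g l) : (x, a) ∈ pathEdges ι g l := by
  rw [mem_pathEdges_iff] at h ⊢
  obtain ⟨p, b, q, rfl, h | h⟩ := h
  · rw [Prod.mk.injEq] at h
    obtain ⟨h1, rfl⟩ := h
    exact ⟨p, _, q, rfl, Or.inr (by simp [invL_invL, ← h1])⟩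
  · rw [Prod.mk.injEq] at h
    obtain ⟨h1, h2⟩ := h
    have hab : a = b := by rw [← invL_invL a, h2, invL_invL]
    subst hab
    exact ⟨p, a, q, rfl, Or.inl (by rw [mul_right_cancel h1])⟩

theorem pathEdges_finite (g : G) (l : List (Letter X)) : (pathEdges ι g l).Finite := by
  induction l generalizing g with
  | nil => simp [pathEdges]
  | cons a l ih => exact ((ih _).insert _).insert _

theorem mem_translate (h : G) (Δ : Set (G × Letter X)) (e : G × Letter X) :
    e ∈ translate h Δ ↔ (h⁻¹ * e.1, e.2) ∈ Δ := by
  constructor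
  · rintro ⟨e, he, rfl⟩
    simpa using he
  · intro he
    exact ⟨_, he, by simp⟩

theorem translate_translate (g h : G) (Δ : Set (G × Letter X)) :
    translate g (translate h Δ) = translate (g * h) Δ := by
  ext e; simp [mem_translate, mul_assoc]

theorem translate_one (Δ : Set (G × Letter X)) : translate 1 Δ = Δ := by
  ext e; simp [mem_translate]

theorem translate_mono (g : G) {Δ Θ : Set (G × Letter X)} (h : Δ ⊆ Θ) :
    translate g Δ ⊆ translate g Θ := Set.image_mono h

theorem translate_subset_iff (g : G) (Δ Θ : Set (G × Letter X)) :
    translate g Δ ⊆ Θ ↔ Δ ⊆ translate g⁻¹ Θ := by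
  constructor <;> intro h
  · simpa [translate_translate, translate_one] using translate_mono g⁻¹ h
  · simpa [translate_translate, translate_one] using translate_mono g h

theorem translate_pathEdges (h g : G) (l : List (Letter X)) :
    translate h (pathEdges ι g l) = pathEdges ι (h * g) l := by
  ext ⟨x, b⟩
  rw [mem_translate, mem_pathEdges_iff, mem_pathEdges_iff]
  simp only [Prod.mk.injEq, inv_mul_eq_iff_eq_mul, mul_assoc]

theorem translate_Gamma (g : G) (w : Word X) :
    translate g (Gamma ι w) = pathEdges ι g (FreeMonoid.toList w) := by
  rw [Gamma, translate_pathEdges, mul_one]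

/-! ### Cyclic subgraphs -/

theorem subset_cyclicClosure (Δ : Set (G × Letter X)) : Δ ⊆ cyclicClosure ι Δ :=
  Set.subset_sInter fun _ h => h.2

theorem cyclicClosure_subset {Δ Θ : Set (G × Letter X)} (h : IsCyclicSubgraph ι Θ)
    (h' : Δ ⊆ Θ) : cyclicClosure ι Δ ⊆ Θ := Set.sInter_subset_of_mem ⟨h, h'⟩

theorem isCyclicSubgraph_cyclicClosure (Δ : Set (G × Letter X)) :
    IsCyclicSubgraph ι (cyclicClosure ι Δ) := by
  rintro g w hw ⟨e, he, he'⟩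
  refine Set.subset_sInter fun Θ hΘ => hΘ.1 g w hw ⟨e, he, ?_⟩
  exact cyclicClosure_subset ι hΘ.1 hΘ.2 he'

theorem cyclicClosure_le_iff {Δ Δ' : Set (G × Letter X)} :
    cyclicClosure ι Δ ⊆ cyclicClosure ι Δ' ↔ Δ ⊆ cyclicClosure ι Δ' :=
  ⟨(subset_cyclicClosure ι Δ).trans, cyclicClosure_subset ι (isCyclicSubgraph_cyclicClosure ι Δ')⟩

theorem cyclicClosure_mono {Δ Δ' : Set (G × Letter X)} (h : Δ ⊆ Δ') :
    cyclicClosure ι Δ ⊆ cyclicClosure ι Δ' :=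
  (cyclicClosure_le_iff ι).2 (h.trans (subset_cyclicClosure ι Δ'))

theorem isCyclicSubgraph_translate (h : G) {Θ : Set (G × Letter X)}
    (hΘ : IsCyclicSubgraph ι Θ) : IsCyclicSubgraph ι (translate h Θ) := by
  rintro g w hw ⟨e, he, he'⟩
  have key : translate (h⁻¹ * g) (Gamma ι w) ⊆ Θ := by
    refine hΘ _ w hw ⟨(h⁻¹ * e.1, e.2), ?_, ?_⟩
    · rw [mem_translate] at he ⊢
      simpa [mul_assoc] using he
    · rwa [mem_translate] at he'
  simpa [translate_translate] using translate_mono h key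

theorem cyclicClosure_translate (h : G) (Δ : Set (G × Letter X)) :
    cyclicClosure ι (translate h Δ) = translate h (cyclicClosure ι Δ) := by
  have key : ∀ (h : G) (Δ : Set (G × Letter X)),
      cyclicClosure ι (translate h Δ) ⊆ translate h (cyclicClosure ι Δ) := fun h Δ =>
    cyclicClosure_subset ι (isCyclicSubgraph_translate ι h (isCyclicSubgraph_cyclicClosure ι Δ))
      (translate_mono h (subset_cyclicClosure ι Δ))
  refine (key h Δ).antisymm ((translate_subset_iff _ _ _).2 ?_)
  simpa [translate_translate, translate_one] using key h⁻¹ (translate h Δ)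

theorem cyclicClosure_union_translate (h : G) (Δ Ξ : Set (G × Letter X)) :
    cyclicClosure ι (cyclicClosure ι Δ ∪ translate h (cyclicClosure ι Ξ)) =
      cyclicClosure ι (Δ ∪ translate h Ξ) := by
  apply Set.Subset.antisymm
  · rw [cyclicClosure_le_iff, ← cyclicClosure_translate]
    exact Set.union_subset (cyclicClosure_mono ι Set.subset_union_left)
      (cyclicClosure_mono ι Set.subset_union_right)
  · exact cyclicClosure_mono ι (Set.union_subset_union (subset_cyclicClosure ι Δ)
      (translate_mono h (subset_cyclicClosure ι Ξ)))

theorem cyclicClosure_empty : cyclicClosure ι (∅ : Set (G × Letter X)) = ∅ :=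
  Set.subset_empty_iff.1 <| cyclicClosure_subset ι
    (fun _ _ _ h => by simp at h) (Set.empty_subset _)

/-! ### Two simple paths with the same endpoints -/

/-- Any two vertices of a simple path are joined by a simple path inside it. -/
theorem exists_subpath {g x y : G} {u : List (Letter X)} (hu : (verts ι g u).Nodup)
    (hx : x ∈ verts ι g u) (hy : y ∈ verts ι g u) :
    ∃ s, y = x * ev ι s ∧ (verts ι x s).Nodup ∧ verts ι x s ⊆ verts ι g u ∧
      pathEdges ι x s ⊆ pathEdges ι g u := by
  have key : ∀ p s q, u = p ++ (s ++ q) → (verts ι (g * ev ι p) s).Nodup ∧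
      verts ι (g * ev ι p) s ⊆ verts ι g u ∧
      pathEdges ι (g * ev ι p) s ⊆ pathEdges ι g u := by
    rintro p s q rfl
    have hsub : List.Sublist (verts ι (g * ev ι p) s) (verts ι g (p ++ (s ++ q))) := by
      rw [verts_append, verts_append]
      refine List.Sublist.trans ?_ (List.sublist_append_right _ _)
      rw [verts]
      refine List.Sublist.append_left ?_ _
      rw [List.singleton_sublist]
      exact start_mem_verts ι _ q
    refine ⟨hu.sublist hsub, hsub.subset, ?_⟩
    rw [pathEdges_append, pathEdges_append]
    exact fun e he => Or.inr (Or.inl he)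
  rw [mem_verts_iff] at hx hy
  obtain ⟨p, q, hpq, rfl⟩ := hx
  obtain ⟨p', q', hpq', rfl⟩ := hy
  rcases List.append_eq_append_iff.1 (hpq.symm.trans hpq') with ⟨s, rfl, rfl⟩ | ⟨s, rfl, rfl⟩
  · exact ⟨s, by simp [mul_assoc], key p s q' hpq⟩
  · obtain ⟨h1, h2, h3⟩ := key p' s q hpq'
    refine ⟨linv s, by simp [mul_assoc], ?_⟩
    rw [ev_append, ← mul_assoc, verts_linv, pathEdges_linv]
    exact ⟨List.nodup_reverse.2 h1, fun e he => h2 (List.mem_reverse.1 he), h3⟩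

/-- A nonempty path ending in `U` splits at the first vertex after its start lying in `U`. -/
theorem exists_first_return (U : List G) {p : G} {v : List (Letter X)} (hv : v ≠ [])
    (hend : p * ev ι v ∈ U) :
    ∃ a v₁ v₂, v = a :: v₁ ++ v₂ ∧ p * ev ι (a :: v₁) ∈ U ∧
      ∀ x ∈ iv ι (p * evalLetter ι a) v₁, x ∉ U := by
  induction v generalizing p with
  | nil => exact absurd rfl hv
  | cons a v ih =>
    by_cases ha : p * evalLetter ι a ∈ U
    · exact ⟨a, [], v, rfl, by simpa using ha, by simp [iv]⟩
    · have hv' : v ≠ [] := by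
        rintro rfl
        simp [ha] at hend
      obtain ⟨b, v₁, v₂, rfl, h1, h2⟩ := ih (p := p * evalLetter ι a) hv'
        (by simpa [mul_assoc] using hend)
      refine ⟨a, b :: v₁, v₂, rfl, by simpa [mul_assoc] using h1, ?_⟩
      intro x hx
      rw [iv, List.mem_cons] at hx
      rcases hx with rfl | hx
      · exact ha
      · exact h2 x hx

/-- A cyclic subgraph containing a simple path `u` contains every simple path whose endpoints
are vertices of `u`. -/
theorem pathEdges_subset_of_cyclic {Θ : Set (G × Letter X)} (hΘ : IsCyclicSubgraph ι Θ)
    {g : G} {u : List (Letter X)} (hu : (verts ι g u).Nodup) (huΘ : pathEdges ι g u ⊆ Θ)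
    (n : ℕ) : ∀ (p : G) (v : List (Letter X)), v.length ≤ n → (verts ι p v).Nodup →
      p ∈ verts ι g u → p * ev ι v ∈ verts ι g u → pathEdges ι p v ⊆ Θ := by
  induction n with
  | zero =>
    intro p v hn _ _ _
    obtain rfl : v = [] := List.length_eq_zero_iff.1 (by omega)
    simp [pathEdges]
  | succ n ih =>
    intro p v hn hv hp hend
    by_cases hv0 : v = []
    · simp [hv0, pathEdges]
    obtain ⟨a, v₁, v₂, rfl, hq, hint⟩ := exists_first_return ι _ hv0 hend
    rw [verts_append] at hv
    have hv2 := (List.nodup_append.1 hv).2.1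
    have hiv := (List.nodup_append.1 hv).1
    have hpq : p ≠ p * ev ι (a :: v₁) := (List.nodup_append.1 hv).2.2 p (by simp [iv]) _
      (start_mem_verts ι _ v₂)
    rw [pathEdges_append]
    refine Set.union_subset ?_ (ih _ v₂ ?_ hv2 hq ?_)
    · obtain ⟨s, hs, hsn, hsu, hse⟩ := exists_subpath ι hu hq hp
      have hs0 : s ≠ [] := by
        rintro rfl
        rw [ev_nil, mul_one] at hs
        exact hpq hs
      have hcyc : IsSimpleCycleWordG ι (FreeMonoid.ofList (a :: v₁ ++ s)) := by
        rw [simpleCycle_iff, FreeMonoid.toList_ofList, ← iv_nodup_iff ι p]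
        refine ⟨by simp, ?_, ?_⟩
        · rw [ev_append]
          rw [mul_assoc] at hs
          exact left_eq_mul.1 hs
        · rw [verts, ← hs] at hsn
          have hsn' := List.nodup_append.1 hsn
          rw [iv_append, List.nodup_append]
          refine ⟨hiv, hsn'.1, ?_⟩
          rintro x hx y hy rfl
          rw [iv, List.mem_cons] at hx
          rcases hx with rfl | hx
          · exact hsn'.2.2 x hy x (by simp) rfl
          · exact hint x hx (hsu (List.mem_append_left _ hy))
      have hC := hΘ p _ hcyc
      rw [translate_Gamma, FreeMonoid.toList_ofList, pathEdges_append] at hC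
      refine Set.subset_union_left.trans (hC ?_)
      obtain ⟨b, s', rfl⟩ := List.exists_cons_of_ne_nil hs0
      have hb : (p * ev ι (a :: v₁), b) ∈ pathEdges ι (p * ev ι (a :: v₁)) (b :: s') := by
        simp [pathEdges]
      exact ⟨_, Or.inr hb, huΘ (hse hb)⟩
    · simp at hn; omega
    · simpa [mul_assoc] using hend

/-! ### The map from words to pairs respects the relations -/

theorem evalWord_eq (w : Word X) : evalWord ι w = ev ι (FreeMonoid.toList w) := rfl

theorem evalWord_mul (u v : Word X) : evalWord ι (u * v) = evalWord ι u * evalWord ι v := by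
  simp [evalWord_eq]

theorem evalWord_wordInv (w : Word X) : evalWord ι (wordInv w) = (evalWord ι w)⁻¹ :=
  ev_linv ι _

theorem Gamma_mul (u v : Word X) :
    Gamma ι (u * v) = Gamma ι u ∪ translate (evalWord ι u) (Gamma ι v) := by
  rw [translate_Gamma, Gamma, FreeMonoid.toList_mul, pathEdges_append, one_mul]
  rfl

theorem Gamma_wordInv (w : Word X) :
    Gamma ι (wordInv w) = translate (evalWord ι w)⁻¹ (Gamma ι w) := by
  rw [translate_Gamma]
  exact (pathEdges_linv' ι _ 1).trans (by rw [one_mul]; rfl)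

theorem Gamma_mul_inv (u : Word X) : Gamma ι (u * wordInv u) = Gamma ι u := by
  simp [Gamma_mul, Gamma_wordInv, translate_translate, translate_one]

theorem evalWord_mul_inv (u : Word X) : evalWord ι (u * wordInv u) = 1 := by
  simp [evalWord_mul, evalWord_wordInv]

theorem Gamma_mul_inv_mul (u v : Word X) :
    Gamma ι (u * wordInv u * v) = Gamma ι u ∪ Gamma ι v := by
  rw [Gamma_mul, Gamma_mul_inv, evalWord_mul_inv, translate_one]

theorem evalWord_mul_inv_mul (u v : Word X) :
    evalWord ι (u * wordInv u * v) = evalWord ι v := by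
  rw [evalWord_mul, evalWord_mul_inv, one_mul]

theorem cyclicClosure_Gamma_mul (u v : Word X) :
    cyclicClosure ι (Gamma ι (u * v)) = cyclicClosure ι
      (cyclicClosure ι (Gamma ι u) ∪ translate (evalWord ι u) (cyclicClosure ι (Gamma ι v))) := by
  rw [cyclicClosure_union_translate, Gamma_mul]

theorem cyclicClosure_Gamma_inv (w : Word X) :
    cyclicClosure ι (Gamma ι (wordInv w)) =
      translate (evalWord ι w)⁻¹ (cyclicClosure ι (Gamma ι w)) := by
  rw [Gamma_wordInv, cyclicClosure_translate]

theorem wagnerRel_mmRel {u v : Word X} (h : wagnerRel u v) : mmRel ι u v := by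
  rcases h with ⟨w, rfl, rfl⟩ | ⟨u, v, rfl, rfl⟩
  · exact ⟨by simp [Gamma_mul_inv_mul], by simp [evalWord_mul_inv_mul]⟩
  · refine ⟨?_, ?_⟩
    · rw [Gamma_mul_inv_mul, Gamma_mul_inv_mul, Gamma_mul_inv, Gamma_mul_inv, Set.union_comm]
    · simp [evalWord_mul_inv_mul, evalWord_mul_inv]

theorem Gamma_subset_of_spRel {u v : Word X} (h : spRel ι u v) :
    Gamma ι v ⊆ cyclicClosure ι (Gamma ι u) := by
  obtain ⟨hu, hv, he⟩ := h
  rw [simplePath_iff] at hu hv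
  refine pathEdges_subset_of_cyclic ι (isCyclicSubgraph_cyclicClosure ι _) hu
    (subset_cyclicClosure ι _) _ 1 _ le_rfl hv (start_mem_verts ι _ _) ?_
  rw [← evalWord_eq, ← he]
  exact end_mem_verts ι _ _

theorem presCon_sound {u v : Word X} (h : presCon (msfRel ι) u v) :
    evalWord ι u = evalWord ι v ∧ cyclicClosure ι (Gamma ι u) = cyclicClosure ι (Gamma ι v) := by
  have base : ∀ u v, wagnerRel u v ∨ msfRel ι u v → evalWord ι u = evalWord ι v ∧
      cyclicClosure ι (Gamma ι u) = cyclicClosure ι (Gamma ι v) := by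
    have mm : ∀ u v, mmRel ι u v → evalWord ι u = evalWord ι v ∧
      cyclicClosure ι (Gamma ι u) = cyclicClosure ι (Gamma ι v) := fun u v h => ⟨h.2, by rw [h.1]⟩
    rintro u v (h | h | h)
    · exact mm u v (wagnerRel_mmRel ι h)
    · exact mm u v h
    · exact ⟨h.2.2, ((cyclicClosure_le_iff ι).2
        (Gamma_subset_of_spRel ι ⟨h.2.1, h.1, h.2.2.symm⟩)).antisymm
        ((cyclicClosure_le_iff ι).2 (Gamma_subset_of_spRel ι h))⟩
  induction (h : ConGen.Rel _ u v) with
  | of a b hab =>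
    rcases hab with hab | hab
    · exact base a b hab
    · obtain ⟨h1, h2⟩ := base _ _ hab
      rw [evalWord_wordInv, evalWord_wordInv, inv_inj] at h1
      rw [cyclicClosure_Gamma_inv, cyclicClosure_Gamma_inv, h1] at h2
      refine ⟨h1, ?_⟩
      simpa [translate_translate, translate_one] using congrArg (translate (evalWord ι b)) h2
  | refl a => exact ⟨rfl, rfl⟩
  | symm _ ih => exact ⟨ih.1.symm, ih.2.symm⟩
  | trans _ _ ih ih' => exact ⟨ih.1.trans ih'.1, ih.2.trans ih'.2⟩
  | mul _ _ ih ih' =>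
    refine ⟨by rw [evalWord_mul, evalWord_mul, ih.1, ih'.1], ?_⟩
    rw [cyclicClosure_Gamma_mul, cyclicClosure_Gamma_mul, ih.1, ih.2, ih'.2]

/-! ### Words with the same image are equal in `M_sF(G,X)` -/

theorem presCon_of_mm {u v : Word X} (h : Gamma ι u = Gamma ι v)
    (h' : evalWord ι u = evalWord ι v) : presCon (msfRel ι) u v :=
  ConGen.Rel.of _ _ (Or.inl (Or.inr (Or.inl ⟨h, h'⟩)))

theorem presCon_of_sp {u v : Word X} (h : spRel ι u v) : presCon (msfRel ι) u v :=
  ConGen.Rel.of _ _ (Or.inl (Or.inr (Or.inr h)))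

theorem presCon_absorb {u v : Word X} (h : Gamma ι v ⊆ Gamma ι u) :
    presCon (msfRel ι) u (v * wordInv v * u) :=
  presCon_of_mm ι (by rw [Gamma_mul_inv_mul, Set.union_eq_right.2 h])
    (evalWord_mul_inv_mul ι v u).symm

/-- In a simple cycle `a z` that is not a loop, the edge `a` and the path `z⁻¹` are simple paths
with the same endpoints. -/
theorem spRel_of_cycle {a : Letter X} {z : List (Letter X)} (hz : z ≠ [])
    (hev : ev ι (a :: z) = 1) (hnd : (iv ι 1 (a :: z)).Nodup) :
    spRel ι (FreeMonoid.ofList [a]) (FreeMonoid.ofList (linv z)) := by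
  have hev' : evalLetter ι a * ev ι z = 1 := by simpa using hev
  rw [iv, one_mul] at hnd
  refine ⟨?_, ?_, ?_⟩
  · rw [simplePath_iff]
    obtain ⟨b, z', rfl⟩ := List.exists_cons_of_ne_nil hz
    simp only [iv, List.nodup_cons, List.mem_cons, not_or] at hnd
    simpa [verts, iv] using hnd.1.1
  · rw [simplePath_iff, FreeMonoid.toList_ofList, ← hev', verts_linv, List.nodup_reverse,
      verts, hev']
    exact (List.perm_append_singleton _ _).nodup_iff.2 hnd
  · rw [evalWord_eq, evalWord_eq]
    simpa using eq_inv_of_mul_eq_one_left hev'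

/-- If a simple cycle meets `Γ_u`, then `u` equals in `M_sF(G,X)` a word whose graph contains
the cycle. -/
theorem exists_presCon_cycle {u w : Word X} {g : G} (hw : IsSimpleCycleWordG ι w)
    (hne : (translate g (Gamma ι w) ∩ Gamma ι u).Nonempty) :
    ∃ u', presCon (msfRel ι) u u' ∧ translate g (Gamma ι w) ⊆ Gamma ι u' := by
  obtain ⟨-, hev, hnd⟩ := (simpleCycle_iff ι w).1 hw
  obtain ⟨e, he, heu⟩ := hne
  rw [translate_Gamma] at he ⊢
  obtain ⟨p, a, q, hpq, he⟩ := (mem_pathEdges_iff ι _ _ _).1 he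
  rw [hpq] at hev hnd ⊢
  -- Rotate the cycle so that it starts with the common edge.
  set x := g * ev ι p with hx
  have hxa : (x, a) ∈ Gamma ι u := by
    rcases he with rfl | rfl
    · exact heu
    · exact inv_mem_pathEdges ι heu
  have hxg : x * ev ι (a :: q) = g := by
    rw [hx, mul_assoc, ← ev_append, hev, mul_one]
  have hC : pathEdges ι g (p ++ a :: q) = pathEdges ι x (a :: (q ++ p)) := by
    rw [← List.cons_append, pathEdges_append, pathEdges_append, hxg, Set.union_comm]
  have hev' : ev ι (a :: (q ++ p)) = 1 := by
    rw [← List.cons_append, ev_append, mul_eq_one_iff_inv_eq, eq_comm, ← mul_eq_one_iff_eq_inv,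
      ← ev_append, hev]
  have hnd' : (iv ι 1 (a :: (q ++ p))).Nodup := by
    rw [← iv_nodup_iff ι g, iv_append] at hnd
    rw [← iv_nodup_iff ι x, ← List.cons_append, iv_append, hxg]
    exact List.perm_append_comm.nodup_iff.1 hnd
  rw [hC]
  -- A prefix of `u` leads to the start of the common edge.
  obtain ⟨t, r, htr, hxt⟩ : ∃ t r, FreeMonoid.toList u = t ++ r ∧ x = ev ι t := by
    obtain ⟨t, b, r, htr, h | h⟩ := (mem_pathEdges_iff ι _ _ _).1 hxa
    · exact ⟨t, b :: r, htr, by simpa using congrArg Prod.fst h⟩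
    · exact ⟨t ++ [b], r, by simp [htr], by simpa using congrArg Prod.fst h⟩
  have hstep : pathEdges ι x [a] ⊆ Gamma ι u := by
    intro f hf
    simp only [pathEdges, Set.mem_insert_iff, Set.mem_empty_iff_false, or_false] at hf
    rcases hf with rfl | rfl
    · exact hxa
    · refine inv_mem_pathEdges ι ?_
      rwa [evalLetter_invL, mul_inv_cancel_right, invL_invL]
  by_cases hz : q ++ p = []
  · exact ⟨u, (presCon (msfRel ι)).refl u, by rw [hz]; exact hstep⟩
  set z := q ++ p
  have hsp := presCon_of_sp ι (spRel_of_cycle ι hz hev' hnd')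
  set T : Word X := FreeMonoid.ofList t with hT
  have hTx : evalWord ι T = x := hxt.symm
  set A : Word X := FreeMonoid.ofList [a]
  set Z : Word X := FreeMonoid.ofList (linv z)
  have hTA : Gamma ι (T * A) ⊆ Gamma ι u := by
    rw [Gamma_mul, hTx, translate_Gamma]
    refine Set.union_subset ?_ hstep
    rw [Gamma, Gamma, htr, pathEdges_append]
    exact Set.subset_union_left
  have hTAZ : presCon (msfRel ι) (T * A) (T * Z) :=
    (presCon (msfRel ι)).mul ((presCon (msfRel ι)).refl T) hsp
  refine ⟨T * Z * wordInv (T * Z) * u, (presCon (msfRel ι)).trans (presCon_absorb ι hTA)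
    ((presCon (msfRel ι)).mul ((presCon (msfRel ι)).mul hTAZ (presCon_inv hTAZ))
      ((presCon (msfRel ι)).refl u)), ?_⟩
  rw [Gamma_mul_inv_mul, Gamma_mul, hTx, translate_Gamma]
  have h1 : pathEdges ι x (linv z) = pathEdges ι (x * ev ι [a]) z := by
    rw [pathEdges_linv', eq_comm]
    congr 2
    exact eq_inv_of_mul_eq_one_left (by simpa using hev')
  have h2 : a :: z = [a] ++ z := rfl
  rw [h2, pathEdges_append, ← h1]
  exact Set.union_subset (hstep.trans Set.subset_union_right)
    (Set.subset_union_right.trans Set.subset_union_left)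

/-- The union of the graphs of all words equal to `u` in `M_sF(G,X)` contains `Γ_u°`, because it is
cyclic. -/
theorem exists_presCon_mem {u : Word X} {e : G × Letter X}
    (he : e ∈ cyclicClosure ι (Gamma ι u)) :
    ∃ u', presCon (msfRel ι) u u' ∧ e ∈ Gamma ι u' := by
  have hcyc : IsCyclicSubgraph ι {e | ∃ u', presCon (msfRel ι) u u' ∧ e ∈ Gamma ι u'} := by
    rintro g w hw ⟨f, hf, u', hu', hfu'⟩
    obtain ⟨u'', hu'', hsub⟩ := exists_presCon_cycle ι hw ⟨f, hf, hfu'⟩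
    exact fun f' hf' => ⟨u'', (presCon (msfRel ι)).trans hu' hu'', hsub hf'⟩
  exact cyclicClosure_subset ι hcyc (fun f hf => ⟨u, (presCon (msfRel ι)).refl u, hf⟩) he

/-- If a class `P` of words is closed under `(u, v) ↦ u u⁻¹ v`, the graphs of its members are
directed under inclusion, so a finite set of edges covered by them is covered by a single one. -/
theorem exists_Gamma_superset {P : Word X → Prop} (h0 : ∃ u, P u)
    (hP : ∀ u v, P u → P v → P (u * wordInv u * v)) {S : Set (G × Letter X)} (hS : S.Finite)
    (h : ∀ e ∈ S, ∃ u, P u ∧ e ∈ Gamma ι u) : ∃ u, P u ∧ S ⊆ Gamma ι u := by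
  induction S, hS using Set.Finite.induction_on with
  | empty => exact h0.imp fun u hu => ⟨hu, Set.empty_subset _⟩
  | insert _ _ ih =>
    obtain ⟨u, hu, hSu⟩ := ih fun e he => h e (Or.inr he)
    obtain ⟨v, hv, hev⟩ := h _ (Or.inl rfl)
    refine ⟨_, hP u v hu hv, ?_⟩
    rw [Gamma_mul_inv_mul]
    exact Set.insert_subset (Or.inr hev) (hSu.trans Set.subset_union_left)

theorem presCon_absorb_closure {u v : Word X} (h : Gamma ι v ⊆ cyclicClosure ι (Gamma ι u)) :
    presCon (msfRel ι) u (v * wordInv v * u) := by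
  set c := presCon (msfRel ι) with hc
  obtain ⟨u', hu', hsub⟩ := exists_Gamma_superset ι (P := fun u' => c u u') ⟨u, c.refl u⟩
    (fun a b ha hb => c.trans (c.trans (presCon_absorb ι subset_rfl)
      (c.mul (c.mul ha (presCon_inv ha)) (c.refl u))) (c.mul (c.refl _) hb))
    (pathEdges_finite ι 1 (FreeMonoid.toList v)) (fun e he => exists_presCon_mem ι (h he))
  exact c.trans hu' (c.trans (presCon_absorb ι hsub) (c.mul (c.refl _) (c.symm hu')))

theorem presCon_complete {u v : Word X} (h : evalWord ι u = evalWord ι v)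
    (h' : cyclicClosure ι (Gamma ι u) = cyclicClosure ι (Gamma ι v)) :
    presCon (msfRel ι) u v := by
  set c := presCon (msfRel ι) with hc
  have h1 := presCon_absorb_closure ι (u := u) (v := v) (h' ▸ subset_cyclicClosure ι _)
  have h2 := presCon_absorb_closure ι (u := v) (v := u) (h' ▸ subset_cyclicClosure ι _)
  refine c.trans h1 (c.trans (presCon_of_mm ι ?_ ?_) (c.symm h2))
  · rw [Gamma_mul_inv_mul, Gamma_mul_inv_mul, Set.union_comm]
  · rw [evalWord_mul_inv_mul, evalWord_mul_inv_mul, h]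

/-! ### The isomorphism -/

theorem connFromOne_Gamma (w : Word X) : ConnFromOne ι (Gamma ι w) :=
  fun _ he => ⟨w, subset_rfl, he⟩

theorem SCirc_ext {a b : SCirc ι} (h : a.edges = b.edges) (h' : a.pt = b.pt) : a = b := by
  cases a; cases b
  subst h h'
  rfl

/-- The pair `(Γ_w°, [w])` associated with a word `w`. -/
def wordPair (w : Word X) : SCirc ι where
  edges := cyclicClosure ι (Gamma ι w)
  pt := evalWord ι w
  compact := ⟨Gamma ι w, pathEdges_finite ι _ _, connFromOne_Gamma ι w, rfl⟩
  conn := fun e he => by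
    obtain ⟨u', hu', heu'⟩ := exists_presCon_mem ι he
    exact ⟨u', (presCon_sound ι hu').2 ▸ subset_cyclicClosure ι _, heu'⟩
  mem_pt := ⟨w, subset_cyclicClosure ι _, rfl⟩

theorem wordPair_eq_iff (u v : Word X) : wordPair ι u = wordPair ι v ↔
    evalWord ι u = evalWord ι v ∧
      cyclicClosure ι (Gamma ι u) = cyclicClosure ι (Gamma ι v) := by
  refine ⟨fun h => ⟨congrArg SCirc.pt h, congrArg SCirc.edges h⟩, fun ⟨h1, h2⟩ => ?_⟩
  exact SCirc_ext ι h2 h1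

theorem wordPair_surjective : Function.Surjective (wordPair ι) := by
  rintro ⟨Δ, g, ⟨F, hF, hFc, rfl⟩, hconn, w, hw, rfl⟩
  obtain ⟨w₀, hw₀, hFw₀⟩ := exists_Gamma_superset ι (P := fun w => Gamma ι w ⊆ F)
    ⟨1, by simp [Gamma, pathEdges]⟩
    (fun u v hu hv => by rw [Gamma_mul_inv_mul]; exact Set.union_subset hu hv) hF hFc
  refine ⟨w₀ * wordInv w₀ * w, ?_⟩
  simp only [wordPair, SCirc.mk.injEq, evalWord_mul_inv_mul, and_true, Gamma_mul_inv_mul,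
    hw₀.antisymm hFw₀]
  exact ((cyclicClosure_le_iff ι).2 (Set.union_subset (subset_cyclicClosure ι F) hw)).antisymm
    (cyclicClosure_mono ι Set.subset_union_left)

/-- The map `M_sF(G,X) → S_∘` induced by `wordPair`. -/
def msfMap : MsF ι → SCirc ι :=
  fun m => Quotient.liftOn' m (wordPair ι)
    (fun u v h => (wordPair_eq_iff ι u v).2 (presCon_sound ι h))

theorem msfMap_bijective : Function.Bijective (msfMap ι) := by
  constructor
  · intro m m'
    refine Quotient.inductionOn₂' m m' fun u v h => Quotient.sound' ?_
    obtain ⟨h1, h2⟩ := (wordPair_eq_iff ι u v).1 h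
    exact presCon_complete ι h1 h2
  · intro s
    obtain ⟨w, rfl⟩ := wordPair_surjective ι s
    exact ⟨mkW _ w, rfl⟩

end

/-- Let `G` be an `X`-generated group.  Then `M_sF(G,X)` is
isomorphic, as an `X`-generated inverse monoid, to the inverse monoid `S_∘` of pairs
`(Δ,g)` of compact connected subgraphs of `Cay(G,X)` containing `1` and `g`, with
multiplication `(Δ,g)(Ξ,h) = ((Δ ∪ gΞ)°, gh)`, identity `(∅,1)`, inversion
`(Δ,g)⁻¹ = (g⁻¹Δ, g⁻¹)`, and generators `(Γ_x°, [x])` for `x ∈ X`: there is a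
bijection `φ` transporting the operations and generators of `M_sF(G,X)` to the ones
just described. -/
theorem statement_4 {X G : Type*} [Group G] (ιG : X → G) (hG : XGen ιG) :
    ∃ φ : MsF ιG ≃ SCirc ιG,
      (∀ m m' : MsF ιG,
        (φ (m * m')).edges =
          cyclicClosure ιG ((φ m).edges ∪ translate (φ m).pt (φ m').edges) ∧
        (φ (m * m')).pt = (φ m).pt * (φ m').pt) ∧
      ((φ 1).edges = ∅ ∧ (φ 1).pt = 1) ∧
      (∀ m : MsF ιG, (φ m⁻¹).edges = translate ((φ m).pt)⁻¹ (φ m).edges ∧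
        (φ m⁻¹).pt = ((φ m).pt)⁻¹) ∧
      (∀ x : X, (φ (genMap (msfRel ιG) x)).edges =
          cyclicClosure ιG (Gamma ιG (FreeMonoid.of (x, true))) ∧
        (φ (genMap (msfRel ιG) x)).pt = ιG x) := by
  refine ⟨Equiv.ofBijective (msfMap ιG) (msfMap_bijective ιG), ?_, ⟨?_, ?_⟩, ?_, ?_⟩
  · intro m m'
    refine Quotient.inductionOn₂' m m' fun u v => ?_
    exact ⟨cyclicClosure_Gamma_mul ιG u v, evalWord_mul ιG u v⟩
  · exact cyclicClosure_empty ιG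
  · exact List.prod_nil
  · intro m
    refine Quotient.inductionOn' m fun u => ?_
    exact ⟨cyclicClosure_Gamma_inv ιG u, evalWord_wordInv ιG u⟩
  · intro x
    exact ⟨rfl, mul_one (ιG x)⟩

end SFI
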